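/- arXiv:2205.11204 — 10 statements merged into one kernel-verified Lean document; each statement's English description precedes it below -/
import Mathlib

section
/- Every P-point contains a set of density zero: if u is a P-point on ℕ, then there exists A ∈ u with lim_{n→∞} |A ∩ {0,…,n−1}|/n = 0. (Consequently no P-point belongs to the closed set F_d = ℕ* \ ⋃{A* : A has density zero}.) -/
/-- A free ultrafilter on `ℕ`: one containing no finite set. -/
def IsFreeUF (u : Ultrafilter ℕ) : Prop := ∀ A ∈ u, Set.Infinite A

/-- A P-point: for every sequence of members there is a pseudo-intersection in the filter. -/
def IsPPoint (u : Ultrafilter ℕ) : Prop :=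
  ∀ A : ℕ → Set ℕ, (∀ n, A n ∈ u) → ∃ B ∈ u, ∀ n, (B \ A n).Finite

/-- `A ⊆ ℕ` has density zero: `|A ∩ {0,…,n−1}|/n → 0`. -/
def HasDensityZero (A : Set ℕ) : Prop :=
  Filter.Tendsto (fun n : ℕ => ((A ∩ Set.Iio n).ncard : ℝ) / n) Filter.atTop (nhds 0)

/-- An ultrafilter on `ℕ` contains a residue class modulo each positive integer. -/
theorem Ultrafilter.exists_residue_class_mem (u : Ultrafilter ℕ) {m : ℕ} (hm : 0 < m) :
    ∃ r, {n : ℕ | n % m = r} ∈ u := by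
  have h : (⋃ r ∈ Set.Iio m, {n : ℕ | n % m = r}) ∈ u := by
    refine Filter.mem_of_superset (Filter.univ_mem (f := (u : Filter ℕ))) fun n _ => ?_
    simpa using Nat.mod_lt n hm
  obtain ⟨r, -, hr⟩ := (Ultrafilter.finite_biUnion_mem_iff (Set.finite_Iio m)).1 h
  exact ⟨r, hr⟩

/-- A residue class modulo `m` has at most `n / m + 1` members below `n`. -/
theorem ncard_residue_class_inter_Iio_le (m r n : ℕ) :
    ({k : ℕ | k % m = r} ∩ Set.Iio n).ncard ≤ n / m + 1 := by
  have h : ({k : ℕ | k % m = r} ∩ Set.Iio n).ncard ≤ (Set.Iio (n / m + 1)).ncard := by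
    refine Set.ncard_le_ncard_of_injOn (· / m) ?_ ?_ (Set.finite_Iio _)
    · rintro k ⟨-, hk⟩
      exact Nat.lt_succ_of_le (Nat.div_le_div_right (le_of_lt hk))
    · rintro a ⟨ha, -⟩ b ⟨hb, -⟩ hab
      simp only [Set.mem_ofPred_eq] at ha hb hab
      rw [← Nat.div_add_mod a m, ← Nat.div_add_mod b m, ha, hb, hab]
  simpa using h

/-- A set almost contained in some residue class modulo every positive integer has density zero. -/
theorem hasDensityZero_of_finite_diff_residue_class {B : Set ℕ} {r : ℕ → ℕ}
    (hB : ∀ k, (B \ {n : ℕ | n % (k + 1) = r k}).Finite) : HasDensityZero B := by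
  rw [HasDensityZero, Metric.tendsto_atTop]
  intro ε hε
  obtain ⟨k, hk⟩ := exists_nat_one_div_lt (half_pos hε)
  set D := B \ {n : ℕ | n % (k + 1) = r k}
  obtain ⟨N, hN⟩ := exists_nat_gt (((D.ncard : ℝ) + 1) / (ε / 2))
  refine ⟨N + 1, fun n hn => ?_⟩
  have hn0 : (0 : ℝ) < n := by exact_mod_cast (by omega : 0 < n)
  have hcard : (B ∩ Set.Iio n).ncard ≤ D.ncard + (n / (k + 1) + 1) := by
    calc (B ∩ Set.Iio n).ncard
        ≤ (D ∪ ({j : ℕ | j % (k + 1) = r k} ∩ Set.Iio n)).ncard := by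
          refine Set.ncard_le_ncard ?_ ((hB k).union ((Set.finite_Iio n).inter_of_right _))
          rintro x ⟨hxB, hxn⟩
          by_cases hx : x % (k + 1) = r k
          · exact Or.inr ⟨hx, hxn⟩
          · exact Or.inl ⟨hxB, hx⟩
      _ ≤ D.ncard + ({j : ℕ | j % (k + 1) = r k} ∩ Set.Iio n).ncard := Set.ncard_union_le _ _
      _ ≤ _ := Nat.add_le_add_left (ncard_residue_class_inter_Iio_le _ _ _) _
  have hcardR : ((B ∩ Set.Iio n).ncard : ℝ) ≤ D.ncard + ((n / (k + 1) : ℕ) + 1) := by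
    exact_mod_cast hcard
  have hdiv : ((n / (k + 1) : ℕ) : ℝ) ≤ n * (1 / ((k : ℝ) + 1)) := by
    simpa [div_eq_mul_inv] using Nat.cast_div_le (α := ℝ) (m := n) (n := k + 1)
  have hmain : (n : ℝ) * (1 / ((k : ℝ) + 1)) < n * (ε / 2) := mul_lt_mul_of_pos_left hk hn0
  have hNn : (N : ℝ) ≤ n := by exact_mod_cast (by omega : N ≤ n)
  have hconst : (D.ncard : ℝ) + 1 < n * (ε / 2) :=
    (div_lt_iff₀ (half_pos hε)).1 (hN.trans_le hNn)
  rw [Real.dist_0_eq_abs, abs_of_nonneg (by positivity), div_lt_iff₀ hn0]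
  linarith

theorem ppoint_contains_density_zero_set (u : Ultrafilter ℕ)
    (hfree : IsFreeUF u) (hP : IsPPoint u) :
    ∃ A ∈ u, HasDensityZero A := by
  choose r hr using fun k : ℕ => u.exists_residue_class_mem k.succ_pos
  obtain ⟨B, hBu, hB⟩ := hP _ hr
  exact ⟨B, hBu, hasDensityZero_of_finite_diff_residue_class hB⟩
end

section
/- For every infinite set X ⊆ ℕ one has limsup_{n→∞} |f⁻¹[X] ∩ {1,…,n}|/n = 1, where f is the factorial-interval map. -/
/-- The factorial-interval map: `facMap n = k` for the unique `k ≥ 1` with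
`k! < n ≤ (k+1)!`, and `facMap n = 0` for `n ≤ 1`. -/
def facMap (n : ℕ) : ℕ :=
  if n ≤ 1 then 0 else Nat.findGreatest (fun k => Nat.factorial k < n) n

theorem facMap_eq_of_mem_Ioc {k n : ℕ}
    (hn : n ∈ Set.Ioc k.factorial (k + 1).factorial) : facMap n = k := by
  have hpos := Nat.factorial_pos k
  have hself := Nat.self_le_factorial k
  obtain ⟨hlt, hle⟩ := hn
  rw [facMap, if_neg (by omega), Nat.findGreatest_eq_iff]
  refine ⟨by omega, fun _ => hlt, fun m hm _ hm' => ?_⟩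
  have := Nat.factorial_le (show k + 1 ≤ m from hm)
  omega

theorem density_Icc_le_one (A : Set ℕ) (n : ℕ) :
    ((A ∩ Set.Icc 1 n).ncard : ℝ) / n ≤ 1 := by
  refine div_le_one_of_le₀ ?_ (Nat.cast_nonneg n)
  have h := Set.ncard_le_ncard (Set.inter_subset_right (s := A)) (Set.finite_Icc 1 n)
  rw [← Finset.coe_Icc, Set.ncard_coe_finset, Nat.card_Icc] at h
  exact_mod_cast h

theorem one_sub_le_density_facMap_preimage {X : Set ℕ} {k : ℕ} (hkX : k ∈ X) :
    1 - 1 / ((k : ℝ) + 1) ≤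
      (((facMap ⁻¹' X) ∩ Set.Icc 1 (k + 1).factorial).ncard : ℝ) / (k + 1).factorial := by
  have hsub : Set.Ioc k.factorial (k + 1).factorial ⊆
      (facMap ⁻¹' X) ∩ Set.Icc 1 (k + 1).factorial := fun n hn =>
    ⟨by rwa [Set.mem_preimage, facMap_eq_of_mem_Ioc hn],
      (Nat.factorial_pos k).trans hn.1, hn.2⟩
  have h := Set.ncard_le_ncard hsub ((Set.finite_Icc _ _).inter_of_right _)
  rw [← Finset.coe_Ioc, Set.ncard_coe_finset, Nat.card_Ioc, Nat.sub_le_iff_le_add] at h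
  have hcast : ((k + 1).factorial : ℝ) ≤
      ((facMap ⁻¹' X) ∩ Set.Icc 1 (k + 1).factorial).ncard + k.factorial := by exact_mod_cast h
  have hfac : ((k + 1).factorial : ℝ) = (k + 1) * k.factorial := by
    push_cast [Nat.factorial_succ]
    ring
  have hpos : (0 : ℝ) < k.factorial := by exact_mod_cast Nat.factorial_pos k
  rw [le_div_iff₀ (by positivity)]
  have hmul : (1 - 1 / ((k : ℝ) + 1)) * (k + 1).factorial = (k + 1).factorial - k.factorial := by
    rw [hfac]
    field_simp
  linarith

theorem limsup_density_facMap_preimage (X : Set ℕ) (hX : X.Infinite) :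
    Filter.limsup
      (fun n : ℕ => (((facMap ⁻¹' X) ∩ Set.Icc 1 n).ncard : ℝ) / n)
      Filter.atTop = 1 := by
  apply le_antisymm
  · refine Filter.limsup_le_of_le ?_ (Filter.Eventually.of_forall (density_Icc_le_one _))
    exact Filter.isCoboundedUnder_le_of_le Filter.atTop (x := 0) fun n => by positivity
  · refine le_of_forall_lt fun c hc => ?_
    obtain ⟨d, hcd, hd⟩ := exists_between hc
    refine hcd.trans_le (Filter.le_limsup_of_frequently_le ?_
      (Filter.isBoundedUnder_of ⟨1, density_Icc_le_one _⟩))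
    rw [Filter.frequently_atTop]
    intro N
    obtain ⟨M, hM⟩ := exists_nat_one_div_lt (sub_pos.2 hd)
    obtain ⟨k, hkX, hk⟩ := hX.exists_gt (max N M)
    have hNk : N < k := (le_max_left N M).trans_lt hk
    have hMk : M < k := (le_max_right N M).trans_lt hk
    refine ⟨(k + 1).factorial, ?_, le_trans ?_
      (one_sub_le_density_facMap_preimage hkX)⟩
    · have := Nat.self_le_factorial (k + 1)
      omega
    · have := Nat.one_div_le_one_div (α := ℝ) hMk.le
      linarith
end

section
/- For every free ultrafilter u on ℕ there exists a free ultrafilter v on ℕ such that the image ultrafilter of v under f equals u (that is, {X ⊆ ℕ : f⁻¹[X] ∈ v} = u) and no member of v has density zero. (In other words, the extension of f to βℕ maps F_d onto ℕ*.) -/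
open Filter

theorem facMap_eq {k n : ℕ} (h₁ : k.factorial < n) (h₂ : n ≤ (k + 1).factorial) :
    facMap n = k := by
  have hpos := Nat.factorial_pos k
  have hself := Nat.self_le_factorial k
  rw [facMap, if_neg (by omega), Nat.findGreatest_eq_iff]
  refine ⟨by omega, fun _ => h₁, fun j hj _ hlt => ?_⟩
  have : (k + 1).factorial ≤ j.factorial := Nat.factorial_le hj
  omega

theorem HasDensityZero.mono {A B : Set ℕ} (hB : HasDensityZero B) (h : A ⊆ B) :
    HasDensityZero A := by
  refine squeeze_zero (fun n => by positivity) (fun n => ?_) hB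
  have := Set.ncard_le_ncard (Set.inter_subset_inter_left (Set.Iio n) h)
    ((Set.finite_Iio n).inter_of_right B)
  gcongr

theorem HasDensityZero.union {A B : Set ℕ} (hA : HasDensityZero A) (hB : HasDensityZero B) :
    HasDensityZero (A ∪ B) := by
  refine squeeze_zero (fun n => by positivity) (fun n => ?_) (by simpa using Tendsto.add hA hB)
  rw [← add_div, Set.union_inter_distrib_right]
  gcongr
  exact_mod_cast Set.ncard_union_le _ _

theorem Set.Finite.hasDensityZero {A : Set ℕ} (hA : A.Finite) : HasDensityZero A := by
  refine squeeze_zero (fun n => by positivity) (fun n => ?_)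
    (tendsto_const_div_atTop_nhds_zero_nat (A.ncard : ℝ))
  have := Set.ncard_le_ncard (Set.inter_subset_left (s := A) (t := Set.Iio n)) hA
  gcongr

/-- The filter of sets of natural density one. -/
def densityOneFilter : Filter ℕ :=
  Filter.comk HasDensityZero Set.finite_empty.hasDensityZero (fun _ ht _ h => ht.mono h)
    (fun _ hs _ ht => hs.union ht)

theorem mem_densityOneFilter {A : Set ℕ} : A ∈ densityOneFilter ↔ HasDensityZero Aᶜ :=
  Filter.mem_comk

/-- The factorial interval `(k!, (k+1)!]` fills at least a third of `{0, …, (k+1)!}`. -/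
theorem one_third_le_density_preimage_facMap {X : Set ℕ} {k : ℕ} (hk : 1 ≤ k) (hX : k ∈ X) :
    (1 / 3 : ℝ) ≤ ((facMap ⁻¹' X ∩ Set.Iio ((k + 1).factorial + 1)).ncard : ℝ) /
      ((k + 1).factorial + 1 : ℕ) := by
  have hsub : (Finset.Ioc k.factorial (k + 1).factorial : Set ℕ) ⊆
      facMap ⁻¹' X ∩ Set.Iio ((k + 1).factorial + 1) := by
    intro n hn
    rw [Finset.coe_Ioc, Set.mem_Ioc] at hn
    exact ⟨by rwa [Set.mem_preimage, facMap_eq hn.1 hn.2], Nat.lt_succ_of_le hn.2⟩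
  have hcard := Set.ncard_le_ncard hsub ((Set.finite_Iio _).inter_of_right _)
  rw [Set.ncard_coe_finset, Nat.card_Ioc] at hcard
  have hpos := Nat.factorial_pos k
  have hbound : (k + 1).factorial + 1 ≤ 3 * ((k + 1).factorial - k.factorial) := by
    have : (k + 1).factorial = k * k.factorial + k.factorial := by
      rw [Nat.factorial_succ]; ring
    have := Nat.le_mul_of_pos_left k.factorial hk
    omega
  rw [div_le_div_iff₀ (by norm_num) (by positivity)]
  norm_cast
  omega

theorem not_hasDensityZero_preimage_facMap {X : Set ℕ} (hX : X.Infinite) :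
    ¬ HasDensityZero (facMap ⁻¹' X) := by
  intro h
  obtain ⟨N, hN⟩ := eventually_atTop.1
    (Tendsto.eventually_lt_const (show (0 : ℝ) < 1 / 3 by norm_num) h)
  obtain ⟨k, hkX, hk⟩ := hX.exists_gt N
  have hself := Nat.self_le_factorial (k + 1)
  exact (hN ((k + 1).factorial + 1) (by omega)).not_ge
    (one_third_le_density_preimage_facMap (by omega) hkX)

theorem facMap_maps_Fd_onto_Nstar (u : Ultrafilter ℕ) (hu : IsFreeUF u) :
    ∃ v : Ultrafilter ℕ, IsFreeUF v ∧ Ultrafilter.map facMap v = u ∧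
      ∀ A ∈ v, ¬ HasDensityZero A := by
  have hne : (Filter.comap facMap u ⊓ densityOneFilter).NeBot := by
    refine Filter.inf_neBot_iff.2 fun {S} hS {A} hA => ?_
    obtain ⟨X, hX, hXS⟩ := hS
    by_contra hempty
    have hdisj := Set.disjoint_iff_inter_eq_empty.2 (Set.not_nonempty_iff_eq_empty.1 hempty)
    exact not_hasDensityZero_preimage_facMap (hu X hX)
      ((mem_densityOneFilter.1 hA).mono (hXS.trans hdisj.subset_compl_right))
  have hv := Ultrafilter.of_le (Filter.comap facMap u ⊓ densityOneFilter)
  set v := Ultrafilter.of (Filter.comap facMap u ⊓ densityOneFilter)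
  have hdens : ∀ A ∈ v, ¬ HasDensityZero A := fun A hA hzero =>
    Ultrafilter.compl_notMem_iff.2 hA
      (hv (Filter.mem_inf_of_right (mem_densityOneFilter.2 (by rwa [compl_compl]))))
  refine ⟨v, fun A hA hfin => hdens A hA hfin.hasDensityZero, ?_, hdens⟩
  exact Ultrafilter.coe_le_coe.1 (Filter.map_le_iff_le_comap.2 (hv.trans inf_le_left))
end

section
/- ℕ has a universal permutation: if σ is a permutation of ℕ that has, for every m ≥ 1, infinitely many orbits of cardinality m, and also infinitely many infinite orbits, then for every permutation g of ℕ there exists an injection e : ℕ → ℕ such that σ(e(n)) = e(g(n)) for all n ∈ ℕ. -/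
/-- The orbit of `n` under the permutation `σ` of `ℕ`. -/
def permOrbit (σ : Equiv.Perm ℕ) (n : ℕ) : Set ℕ :=
  Set.range fun k : ℤ => (σ ^ k) n

open Function in
theorem zpow_apply_eq_zpow_apply_iff_minimalPeriod_dvd {α : Type*} (σ : Equiv.Perm α) (x : α)
    (k l : ℤ) : (σ ^ k) x = (σ ^ l) x ↔ (minimalPeriod σ x : ℤ) ∣ k - l := by
  have h := MulAction.zpow_smul_eq_iff_minimalPeriod_dvd (a := σ) (b := x) (n := k - l)
  rw [show minimalPeriod σ x = minimalPeriod (σ • ·) x from rfl, ← h, Equiv.Perm.smul_def,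
    sub_eq_neg_add, zpow_add, zpow_neg, Equiv.Perm.mul_apply, Equiv.Perm.inv_eq_iff_eq, eq_comm]

theorem permOrbit_eq_orbit_zpowers (σ : Equiv.Perm ℕ) (n : ℕ) :
    permOrbit σ n = MulAction.orbit (Subgroup.zpowers σ) n := by
  ext m
  constructor
  · rintro ⟨k, rfl⟩
    exact ⟨⟨σ ^ k, k, rfl⟩, rfl⟩
  · rintro ⟨⟨_, k, rfl⟩, rfl⟩
    exact ⟨k, rfl⟩

theorem ncard_permOrbit (σ : Equiv.Perm ℕ) (n : ℕ) :
    (permOrbit σ n).ncard = Function.minimalPeriod σ n := by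
  rw [permOrbit_eq_orbit_zpowers, ← Nat.card_coe_set_eq,
    Nat.card_congr (MulAction.orbitZPowersEquiv σ n), Nat.card_zmod]
  rfl

theorem permOrbit_zpow_apply (σ : Equiv.Perm ℕ) (k : ℤ) (n : ℕ) :
    permOrbit σ ((σ ^ k) n) = permOrbit σ n := by
  rw [permOrbit_eq_orbit_zpowers, permOrbit_eq_orbit_zpowers]
  exact MulAction.orbit_eq_iff.2 ⟨⟨σ ^ k, k, rfl⟩, rfl⟩

/-- If `σ` has points `b r` in pairwise distinct orbits, with `b r` of the same period under `σ`
as `r` under `g`, then `g` embeds into `σ`. -/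
theorem exists_injective_semiconj_of_minimalPeriod_eq (σ g : Equiv.Perm ℕ) (b : ℕ → ℕ)
    (hper : ∀ r, Function.minimalPeriod σ (b r) = Function.minimalPeriod g r)
    (horb : Function.Injective fun r => permOrbit σ (b r)) :
    ∃ e : ℕ → ℕ, Function.Injective e ∧ ∀ n, σ (e n) = e (g n) := by
  have hrep : ∃ rep : ℕ → ℕ, (∀ n, g.SameCycle (rep n) n) ∧ ∀ n, rep (g n) = rep n := by
    let s := Equiv.Perm.SameCycle.setoid g
    refine ⟨fun n => (Quotient.mk s n).out, fun n => Quotient.mk_out (s := s) n, fun n => ?_⟩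
    exact congrArg Quotient.out
      (Quotient.sound (s := s) (show g.SameCycle (g n) n from
        Equiv.Perm.sameCycle_apply_left.2 (Equiv.Perm.SameCycle.refl _ _)))
  obtain ⟨rep, hrep, hrepg⟩ := hrep
  choose k hk using hrep
  have transfer (r : ℕ) (i j : ℤ) : (σ ^ i) (b r) = (σ ^ j) (b r) ↔ (g ^ i) r = (g ^ j) r := by
    simp only [zpow_apply_eq_zpow_apply_iff_minimalPeriod_dvd, hper]
  refine ⟨fun n => (σ ^ k n) (b (rep n)), fun n m h => ?_, fun n => ?_⟩
  · have hr : rep n = rep m := horb <| by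
      simpa only [permOrbit_zpow_apply] using congrArg (permOrbit σ) h
    simp only [hr] at h
    rw [← hk n, ← hk m, hr]
    exact (transfer _ _ _).1 h
  · change σ ((σ ^ k n) (b (rep n))) = (σ ^ k (g n)) (b (rep (g n)))
    rw [hrepg, ← Equiv.Perm.mul_apply, ← zpow_one_add, transfer, zpow_one_add,
      Equiv.Perm.mul_apply, hk, ← hrepg, hk]

theorem universal_permutation_of_Nat (σ : Equiv.Perm ℕ)
    (hfin : ∀ m : ℕ, 1 ≤ m →
      {O : Set ℕ | (∃ n, O = permOrbit σ n) ∧ O.ncard = m}.Infinite)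
    (hinf : {O : Set ℕ | (∃ n, O = permOrbit σ n) ∧ O.Infinite}.Infinite)
    (g : Equiv.Perm ℕ) :
    ∃ e : ℕ → ℕ, Function.Injective e ∧ ∀ n, σ (e n) = e (g n) := by
  have hall (m : ℕ) : {O : Set ℕ | (∃ n, O = permOrbit σ n) ∧ O.ncard = m}.Infinite := by
    rcases Nat.eq_zero_or_pos m with rfl | hm
    · exact hinf.mono fun O hO => ⟨hO.1, hO.2.ncard⟩
    · exact hfin m hm
  let f (m : ℕ) := (hall m).natEmbedding
  choose b hb using fun r : ℕ => (f (Function.minimalPeriod g r) r).2.1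
  have hper (r : ℕ) : Function.minimalPeriod σ (b r) = Function.minimalPeriod g r := by
    rw [← ncard_permOrbit, ← hb]
    exact (f (Function.minimalPeriod g r) r).2.2
  refine exists_injective_semiconj_of_minimalPeriod_eq σ g b hper fun r r' h => ?_
  have hp : Function.minimalPeriod g r = Function.minimalPeriod g r' := by
    rw [← hper, ← hper, ← ncard_permOrbit, ← ncard_permOrbit]
    exact congrArg Set.ncard h
  simp only [← hb] at h
  rw [hp] at h
  exact (f _).injective (Subtype.ext h)
end

section
/- If h : βℕ → βℕ is continuous and injective (hence a topological embedding, βℕ being compact Hausdorff), then there exists a single map g : ℕ → ℕ such that for every ultrafilter p on ℕ the image of h(p) under g equals p, i.e. {X ⊆ ℕ : g⁻¹[X] ∈ h(p)} = p. In particular, p ≤_RF q implies p ≤_RK q. -/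
open Filter

/-- The pushforward of ultrafilters along a map of discrete spaces is continuous. -/
theorem Ultrafilter.continuous_map {α β : Type*} (g : α → β) :
    Continuous (Ultrafilter.map g) := by
  refine ultrafilterBasis_is_basis.continuous_iff.2 ?_
  rintro _ ⟨s, rfl⟩
  exact ultrafilter_isOpen_basic (g ⁻¹' s)

/-- Principal ultrafilters are isolated points. -/
theorem Ultrafilter.isOpen_singleton_pure {α : Type*} (a : α) :
    IsOpen ({pure a} : Set (Ultrafilter α)) := by
  convert ultrafilter_isOpen_basic ({a} : Set α) using 1
  ext u
  refine ⟨?_, fun hu => Ultrafilter.coe_le_coe.1 (le_pure_iff.2 hu)⟩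
  rintro rfl
  exact Set.mem_singleton a

/-- A continuous injection separates the image of a principal ultrafilter from the images of all
other ultrafilters by a basic clopen set. -/
theorem Ultrafilter.exists_mem_iff_eq_pure {α β : Type*} {h : Ultrafilter α → Ultrafilter β}
    (hcont : Continuous h) (hinj : Function.Injective h) (a : α) :
    ∃ A : Set β, ∀ q, A ∈ h q ↔ q = pure a := by
  have hclosed : IsClosed (h '' {pure a}ᶜ) :=
    hcont.isClosedMap _ (isOpen_singleton_pure a).isClosed_compl
  have hmem : h (pure a) ∈ (h '' {pure a}ᶜ)ᶜ := by
    rintro ⟨q, hq, hqa⟩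
    exact hq (hinj hqa)
  obtain ⟨_, ⟨A, rfl⟩, hA, hsub⟩ :=
    ultrafilterBasis_is_basis.exists_subset_of_mem_open hmem hclosed.isOpen_compl
  refine ⟨A, fun q => ⟨fun hq => ?_, ?_⟩⟩
  · by_contra hne
    exact hsub hq ⟨q, hne, rfl⟩
  · rintro rfl
    exact hA

theorem embedding_betaN_gives_RK_map (h : Ultrafilter ℕ → Ultrafilter ℕ)
    (hcont : Continuous h) (hinj : Function.Injective h) :
    ∃ g : ℕ → ℕ, ∀ p : Ultrafilter ℕ, Ultrafilter.map g (h p) = p := by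
  choose A hA using Ultrafilter.exists_mem_iff_eq_pure hcont hinj
  let g : ℕ → ℕ := fun k => sInf {n | k ∈ A n}
  have hpure (n : ℕ) : Ultrafilter.map g (h (pure n)) = pure n := by
    refine Ultrafilter.coe_le_coe.1 (le_pure_iff.2 ?_)
    have hlt : ∀ᶠ k in (h (pure n) : Filter ℕ), ∀ m ∈ Finset.range n, k ∉ A m := by
      refine (Finset.eventually_all _).2 fun m hm => ?_
      refine Ultrafilter.compl_mem_iff_notMem.2 fun hmem => ?_
      exact (Finset.mem_range.1 hm).ne (Ultrafilter.pure_injective ((hA m _).1 hmem)).symm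
    have hn : ∀ᶠ k in (h (pure n) : Filter ℕ), k ∈ A n := (hA n _).2 rfl
    change ∀ᶠ k in (h (pure n) : Filter ℕ), g k = n
    filter_upwards [hlt, hn] with k hk hkn
    refine le_antisymm (Nat.sInf_le hkn) (not_lt.1 fun hg => ?_)
    exact hk _ (Finset.mem_range.2 hg) (Nat.sInf_mem (s := {n | k ∈ A n}) ⟨n, hkn⟩)
  exact ⟨g, congrFun (denseRange_pure.equalizer ((Ultrafilter.continuous_map g).comp hcont)
    continuous_id (funext hpure))⟩
end

section
/- Butterfly points exist in ℕ*: there are a point q ∈ ℕ* and disjoint sets A, B ⊆ ℕ* such that the set of accumulation points of A in ℕ* intersected with the set of accumulation points of B in ℕ* equals {q}. (An accumulation point of a set S is a point every neighbourhood of which meets S in a point other than itself.) -/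
/-- `ℕ* = βℕ \ ℕ`: the subspace of free ultrafilters on `ℕ`. -/
abbrev NstarSpace : Type := {u : Ultrafilter ℕ // IsFreeUF u}

/-- Accumulation points in `ℕ*` in terms of members of the ultrafilters. -/
theorem accPt_principal_iff_mem {x : NstarSpace} {A : Set NstarSpace} :
    AccPt x (Filter.principal A) ↔ ∀ S ∈ x.1, ∃ y ∈ A, S ∈ y.1 ∧ y ≠ x := by
  rw [accPt_iff_nhds]
  constructor
  · intro h S hS
    obtain ⟨y, ⟨hyS, hyA⟩, hne⟩ := h {y : NstarSpace | S ∈ y.1}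
      (((ultrafilter_isOpen_basic S).preimage continuous_subtype_val).mem_nhds hS)
    exact ⟨y, hyA, hyS, hne⟩
  · intro h U hU
    rw [nhds_induced, Filter.mem_comap] at hU
    obtain ⟨V, hV, hVU⟩ := hU
    obtain ⟨_, ⟨S, rfl⟩, hxS, hSV⟩ := ultrafilterBasis_is_basis.mem_nhds_iff.1 hV
    obtain ⟨y, hyA, hyS, hne⟩ := h S hxS
    exact ⟨y, ⟨hVU (hSV hyS), hyA⟩, hne⟩

/-- An ultrafilter with the hyperfilter as an image is free. -/
theorem isFreeUF_of_map {x : Ultrafilter ℕ} {f : ℕ → ℕ}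
    (h : x.map f = Filter.hyperfilter ℕ) : IsFreeUF x := by
  intro S hS hfin
  have hmem : f '' S ∈ x.map f := Filter.image_mem_map hS
  rw [h] at hmem
  exact (hfin.image f).notMem_hyperfilter hmem

/-- The point of `ℕ*` concentrated on the `n`-th column of `ℕ ≃ ℕ × ℕ`. -/
noncomputable def columnPoint (n : ℕ) : NstarSpace :=
  ⟨(Filter.hyperfilter ℕ).map (Nat.pair n),
    isFreeUF_of_map (f := fun m => m.unpair.2) <| by
      rw [Ultrafilter.map_map]
      convert Ultrafilter.map_id _
      ext m
      simp⟩

theorem mem_columnPoint {n : ℕ} {S : Set ℕ} :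
    S ∈ (columnPoint n).1 ↔ Nat.pair n ⁻¹' S ∈ Filter.hyperfilter ℕ := Iff.rfl

/-- The limit of the column points along the hyperfilter. -/
noncomputable def columnLimit : Ultrafilter ℕ :=
  Ultrafilter.bind (Filter.hyperfilter ℕ) fun n => (columnPoint n).1

theorem mem_columnLimit {S : Set ℕ} :
    S ∈ columnLimit ↔ {n | S ∈ (columnPoint n).1} ∈ Filter.hyperfilter ℕ := Iff.rfl

theorem map_fst_columnLimit :
    columnLimit.map (fun m => m.unpair.1) = Filter.hyperfilter ℕ := by
  ext S
  rw [Ultrafilter.mem_map, mem_columnLimit]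
  have h : {n | (fun m : ℕ => m.unpair.1) ⁻¹' S ∈ (columnPoint n).1} = S := by
    ext n
    by_cases hn : n ∈ S
    · exact iff_of_true (mem_columnPoint.2 (Filter.univ_mem' fun k => by simpa using hn)) hn
    · simp [mem_columnPoint, Set.preimage, hn]
  rw [h]

theorem map_fst_columnPoint_ne (n : ℕ) :
    (columnPoint n).1.map (fun m => m.unpair.1) ≠ Filter.hyperfilter ℕ := by
  intro h
  have hmem : {n} ∈ (columnPoint n).1.map (fun m => m.unpair.1) :=
    Ultrafilter.mem_map.2 (mem_columnPoint.2 (Filter.univ_mem' fun k => by simp))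
  rw [h] at hmem
  exact (Set.finite_singleton n).notMem_hyperfilter hmem

/-- Every member of the column limit belongs to another ultrafilter lying over the hyperfilter. -/
theorem exists_ne_columnLimit_of_mem {S : Set ℕ} (hS : S ∈ columnLimit) :
    ∃ x : Ultrafilter ℕ, x.map (fun m => m.unpair.1) = Filter.hyperfilter ℕ ∧
      S ∈ x ∧ x ≠ columnLimit := by
  have hsec : ∀ n, ∃ k, S ∈ (columnPoint n).1 → Nat.pair n k ∈ S := by
    intro n
    by_cases hn : S ∈ (columnPoint n).1
    · obtain ⟨k, hk⟩ := Ultrafilter.nonempty_of_mem (mem_columnPoint.1 hn)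
      exact ⟨k, fun _ => hk⟩
    · exact ⟨0, fun h => absurd h hn⟩
  choose f hf using hsec
  refine ⟨(Filter.hyperfilter ℕ).map fun n => Nat.pair n (f n), ?_, ?_, ?_⟩
  · rw [Ultrafilter.map_map]
    convert Ultrafilter.map_id _
    ext m
    simp
  · exact Ultrafilter.mem_map.2 (Filter.mem_of_superset (mem_columnLimit.1 hS) hf)
  · intro h
    have hgraph : Set.range (fun n => Nat.pair n (f n)) ∈ columnLimit := by
      rw [← h]
      exact Filter.range_mem_map
    obtain ⟨n, hn⟩ := Ultrafilter.nonempty_of_mem (mem_columnLimit.1 hgraph)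
    refine ((Set.finite_singleton (f n)).subset ?_).notMem_hyperfilter (mem_columnPoint.1 hn)
    rintro k ⟨m, hm⟩
    obtain ⟨rfl, rfl⟩ := Nat.pair_eq_pair.1 hm
    rfl

/-- The column limit is the only accumulation point of the column points over the hyperfilter. -/
theorem eq_columnLimit {x : NstarSpace}
    (hx : AccPt x (Filter.principal (Set.range columnPoint)))
    (hmap : x.1.map (fun m => m.unpair.1) = Filter.hyperfilter ℕ) : x.1 = columnLimit := by
  refine Ultrafilter.eq_of_le fun S hS => ?_
  by_contra hSx
  have hE : {n | S ∈ (columnPoint n).1} ∈ x.1.map (fun m => m.unpair.1) := by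
    rw [hmap]
    exact hS
  obtain ⟨_, ⟨n, rfl⟩, hn, -⟩ := accPt_principal_iff_mem.1 hx _
    (Filter.inter_mem (Ultrafilter.compl_mem_iff_notMem.2 hSx) hE)
  have hcompl := Filter.mem_of_superset hn Set.inter_subset_left
  obtain ⟨k, hk⟩ := Ultrafilter.nonempty_of_mem
    (mem_columnPoint.1 (Filter.mem_of_superset hn Set.inter_subset_right))
  have hSn : S ∈ (columnPoint n).1 := by simpa using hk
  exact Ultrafilter.compl_mem_iff_notMem.1 hcompl hSn

/-- Accumulation points of the fibre over an ultrafilter belong to the fibre. -/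
theorem map_eq_of_accPt {x : NstarSpace} {f : ℕ → ℕ} {u : Ultrafilter ℕ}
    (hx : AccPt x (Filter.principal {y : NstarSpace | y.1.map f = u})) : x.1.map f = u := by
  symm
  refine Ultrafilter.eq_of_le fun S hS => ?_
  obtain ⟨y, hy, hyS, -⟩ := accPt_principal_iff_mem.1 hx _ hS
  rw [← show y.1.map f = u from hy]
  exact hyS

theorem butterfly_points_exist :
    ∃ (q : NstarSpace) (A B : Set NstarSpace), Disjoint A B ∧
      {x : NstarSpace | AccPt x (Filter.principal A)} ∩
        {x : NstarSpace | AccPt x (Filter.principal B)} = {q} := by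
  refine ⟨⟨columnLimit, isFreeUF_of_map map_fst_columnLimit⟩, Set.range columnPoint,
    {y | y.1.map (fun m => m.unpair.1) = Filter.hyperfilter ℕ}, ?_, ?_⟩
  · rw [Set.disjoint_left]
    rintro _ ⟨n, rfl⟩
    exact map_fst_columnPoint_ne n
  · refine Set.Subset.antisymm ?_ ?_
    · rintro x ⟨hA, hB⟩
      exact Subtype.ext (eq_columnLimit hA (map_eq_of_accPt hB))
    · rintro _ rfl
      refine ⟨accPt_principal_iff_mem.2 fun S hS => ?_, accPt_principal_iff_mem.2 fun S hS => ?_⟩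
      · obtain ⟨n, hn⟩ := Ultrafilter.nonempty_of_mem (mem_columnLimit.1 hS)
        refine ⟨columnPoint n, ⟨n, rfl⟩, hn, fun h => map_fst_columnPoint_ne n ?_⟩
        rw [h]
        exact map_fst_columnLimit
      · obtain ⟨x, hx, hxS, hne⟩ := exists_ne_columnLimit_of_mem hS
        exact ⟨⟨x, isFreeUF_of_map hx⟩, hx, hxS, fun h => hne (congrArg Subtype.val h)⟩
end

section
/- Every P-point is a nowhere dense ultrafilter: if p is a P-point on ℕ and x : ℕ → ℚ is any sequence of rationals, then there exists A ∈ p such that the set {x(n) : n ∈ A} is nowhere dense in ℚ (its closure in ℚ has empty interior). -/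
open Topology in
/-- Given an ultrafilter and a map to a Hausdorff space without isolated points, every nonempty
open set has a nonempty open subset that the map avoids on a member of the ultrafilter. -/
lemma Ultrafilter.exists_open_subset_compl_preimage_mem {α X : Type*} [TopologicalSpace X]
    [T2Space X] [∀ a : X, (𝓝[≠] a).NeBot] (p : Ultrafilter α) (x : α → X) {U : Set X}
    (hU : IsOpen U) (hne : U.Nonempty) :
    ∃ V ⊆ U, IsOpen V ∧ V.Nonempty ∧ (x ⁻¹' V)ᶜ ∈ p := by
  obtain ⟨c, hc⟩ := hne
  obtain ⟨a, ha, b, hb, hab⟩ := (infinite_of_mem_nhds c (hU.mem_nhds hc)).nontrivial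
  obtain ⟨V, W, hV, hW, haV, hbW, hVW⟩ := t2_separation hab
  by_cases h : x ⁻¹' (U ∩ V) ∈ p
  · refine ⟨U ∩ W, Set.inter_subset_left, hU.inter hW, ⟨b, hb, hbW⟩, ?_⟩
    filter_upwards [h] with n hn hn'
    exact Set.disjoint_left.1 hVW hn.2 hn'.2
  · exact ⟨U ∩ V, Set.inter_subset_left, hU.inter hV, ⟨a, ha, haV⟩,
      Ultrafilter.compl_mem_iff_notMem.2 h⟩

open Topology in
/-- If a set meets a nonempty open subset of every nonempty basic open set in only finitely many
points, then it is nowhere dense, provided the space is T1 without isolated points. -/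
lemma TopologicalSpace.IsTopologicalBasis.isNowhereDense_of_finite_inter {X : Type*}
    [TopologicalSpace X] [T1Space X] [∀ a : X, (𝓝[≠] a).NeBot] {b : Set (Set X)}
    (hb : IsTopologicalBasis b) {S : Set X}
    (h : ∀ U ∈ b, U.Nonempty → ∃ V ⊆ U, IsOpen V ∧ V.Nonempty ∧ (V ∩ S).Finite) :
    IsNowhereDense S := by
  refine Set.eq_empty_iff_forall_notMem.2 fun y hy => ?_
  obtain ⟨U, hUb, hyU, hU⟩ := hb.exists_subset_of_mem_open hy isOpen_interior
  obtain ⟨V, hVU, hV, ⟨z, hz⟩, hfin⟩ := h U hUb ⟨y, hyU⟩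
  refine infinite_of_mem_nhds z (hV.mem_nhds hz) (hfin.subset fun v hv => ?_)
  rw [← hfin.isClosed.closure_eq]
  exact hV.inter_closure ⟨hv, interior_subset (hU (hVU hv))⟩

open Topology in
/-- Every sequence in a second countable Hausdorff space without isolated points is nowhere dense
along some member of a given P-point. -/
lemma IsPPoint.exists_isNowhereDense_image {X : Type*} [TopologicalSpace X] [T2Space X]
    [SecondCountableTopology X] [∀ a : X, (𝓝[≠] a).NeBot] {p : Ultrafilter ℕ}
    (hP : IsPPoint p) (x : ℕ → X) : ∃ A ∈ p, IsNowhereDense (x '' A) := by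
  have hb := TopologicalSpace.isBasis_countableBasis X
  obtain ⟨U, hU⟩ := (TopologicalSpace.countable_countableBasis X).exists_eq_range
    ⟨_, (hb.exists_subset_of_mem_open (Set.mem_univ (x 0)) isOpen_univ).choose_spec.1⟩
  have hUb (n : ℕ) : U n ∈ TopologicalSpace.countableBasis X := hU ▸ Set.mem_range_self n
  choose V hVU hVo hVne hVp using fun n => p.exists_open_subset_compl_preimage_mem x
    (hb.isOpen (hUb n)) (TopologicalSpace.nonempty_of_mem_countableBasis (hUb n))
  obtain ⟨B, hBp, hB⟩ := hP _ hVp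
  refine ⟨B, hBp, hb.isNowhereDense_of_finite_inter fun W hW _ => ?_⟩
  obtain ⟨n, rfl⟩ := hU ▸ hW
  refine ⟨V n, hVU n, hVo n, hVne n, ((hB n).image x).subset ?_⟩
  rintro _ ⟨hv, m, hm, rfl⟩
  exact ⟨m, ⟨hm, fun h => h hv⟩, rfl⟩

theorem ppoint_is_nowhere_dense_ultrafilter (p : Ultrafilter ℕ)
    (hfree : IsFreeUF p) (hP : IsPPoint p) (x : ℕ → ℚ) :
    ∃ A ∈ p, interior (closure (x '' A)) = (∅ : Set ℚ) :=
  hP.exists_isNowhereDense_image x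
end

section
/- Suppose that for every pair of commuting continuous maps F, G from the Cantor cube 2^𝔠 (realized as the product space ℝ → Bool with Bool discrete) to itself there exist a free ultrafilter p on ℕ and a point x ∈ 2^𝔠 such that F^[n](x) → x and G^[n](x) → x along p. Then there exists a single free ultrafilter p on ℕ such that for every pair of commuting continuous maps f, g from the Cantor set 2^ω (the product space ℕ → Bool) to itself there is x ∈ 2^ω with f^[n](x) → x and g^[n](x) → x along p. -/
open Filter

open Cardinal in
/-- Continuous self-maps of the Cantor set are determined by their values on a countable dense
set, so there are at most continuum many pairs of them. -/
theorem mk_continuous_pairs_le_continuum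
    (S : Set (((ℕ → Bool) → (ℕ → Bool)) × ((ℕ → Bool) → (ℕ → Bool))))
    (hS : ∀ q ∈ S, Continuous q.1 ∧ Continuous q.2) : #S ≤ 𝔠 := by
  let d := TopologicalSpace.denseSeq (ℕ → Bool)
  have hd : DenseRange d := TopologicalSpace.denseRange_denseSeq _
  let restrict : S → (ℕ → ℕ → Bool) × (ℕ → ℕ → Bool) := fun q => (q.1.1 ∘ d, q.1.2 ∘ d)
  have hinj : Function.Injective restrict := by
    intro q q' h
    obtain ⟨h₁, h₂⟩ := Prod.mk.inj h
    exact Subtype.ext (Prod.ext (hd.equalizer (hS q q.2).1 (hS q' q'.2).1 h₁)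
      (hd.equalizer (hS q q.2).2 (hS q' q'.2).2 h₂))
  refine (mk_le_of_injective hinj).trans (le_of_eq ?_)
  simp

/-- The block with index `r` of a point of the cube, when `e` splits the coordinates into
countable blocks. -/
def cubeBlock {ι κ : Type*} (e : κ ≃ ι × ℕ) (r : ι) (y : κ → Bool) : ℕ → Bool :=
  fun j => y (e.symm (r, j))

/-- The self-map of the cube acting on the block with index `r` as `f r`. -/
def blockMap {ι κ : Type*} (e : κ ≃ ι × ℕ) (f : ι → (ℕ → Bool) → (ℕ → Bool))
    (y : κ → Bool) : κ → Bool :=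
  fun t => f (e t).1 (cubeBlock e (e t).1 y) (e t).2

section

variable {ι κ : Type*} (e : κ ≃ ι × ℕ)

theorem continuous_cubeBlock (r : ι) : Continuous (cubeBlock e r) :=
  continuous_pi fun _ => continuous_apply _

theorem semiconj_cubeBlock_blockMap (f : ι → (ℕ → Bool) → (ℕ → Bool)) (r : ι) :
    Function.Semiconj (cubeBlock e r) (blockMap e f) (f r) := by
  intro y
  funext j
  simp [blockMap, cubeBlock]

theorem continuous_blockMap {f : ι → (ℕ → Bool) → (ℕ → Bool)} (hf : ∀ r, Continuous (f r)) :
    Continuous (blockMap e f) :=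
  continuous_pi fun t =>
    (continuous_apply _).comp ((hf (e t).1).comp (continuous_cubeBlock e (e t).1))

theorem blockMap_comp (f g : ι → (ℕ → Bool) → (ℕ → Bool)) :
    blockMap e f ∘ blockMap e g = blockMap e fun r => f r ∘ g r := by
  funext y t
  exact congrArg (fun z => f (e t).1 z (e t).2) (semiconj_cubeBlock_blockMap e g (e t).1 y)

theorem tendsto_iterate_cubeBlock (f : ι → (ℕ → Bool) → (ℕ → Bool)) (r : ι)
    {l : Filter ℕ} {x : κ → Bool}
    (h : Tendsto (fun n : ℕ => (blockMap e f)^[n] x) l (nhds x)) :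
    Tendsto (fun n : ℕ => (f r)^[n] (cubeBlock e r x)) l (nhds (cubeBlock e r x)) := by
  refine (((continuous_cubeBlock e r).tendsto x).comp h).congr fun n => ?_
  exact (semiconj_cubeBlock_blockMap e f r).iterate_right n x

end

theorem single_ultrafilter_for_multiple_recurrence
    (hcube : ∀ F G : (ℝ → Bool) → (ℝ → Bool),
      Continuous F → Continuous G → F ∘ G = G ∘ F →
      ∃ (p : Ultrafilter ℕ), IsFreeUF p ∧ ∃ x : ℝ → Bool,
        Tendsto (fun n : ℕ => F^[n] x) (p : Filter ℕ) (nhds x) ∧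
        Tendsto (fun n : ℕ => G^[n] x) (p : Filter ℕ) (nhds x)) :
    ∃ p : Ultrafilter ℕ, IsFreeUF p ∧
      ∀ f g : (ℕ → Bool) → (ℕ → Bool),
        Continuous f → Continuous g → f ∘ g = g ∘ f →
        ∃ x : ℕ → Bool,
          Tendsto (fun n : ℕ => f^[n] x) (p : Filter ℕ) (nhds x) ∧
          Tendsto (fun n : ℕ => g^[n] x) (p : Filter ℕ) (nhds x) := by
  let S : Set (((ℕ → Bool) → (ℕ → Bool)) × ((ℕ → Bool) → (ℕ → Bool))) :=
    {q | Continuous q.1 ∧ Continuous q.2 ∧ q.1 ∘ q.2 = q.2 ∘ q.1}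
  have : Nonempty S := ⟨⟨(id, id), continuous_id, continuous_id, rfl⟩⟩
  obtain ⟨i⟩ : Nonempty (S ↪ ℝ) := by
    rw [← Cardinal.le_def, Cardinal.mk_real]
    exact mk_continuous_pairs_le_continuum S fun q hq => ⟨hq.1, hq.2.1⟩
  obtain ⟨e⟩ : Nonempty (ℝ ≃ ℝ × ℕ) := by
    rw [← Cardinal.eq]
    simp [Cardinal.mk_real]
  let s : ℝ → S := Function.invFun i
  have hs : Function.Surjective s := Function.invFun_surjective i.injective
  let f : ℝ → (ℕ → Bool) → (ℕ → Bool) := fun r => (s r).1.1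
  let g : ℝ → (ℕ → Bool) → (ℕ → Bool) := fun r => (s r).1.2
  have hcomm : blockMap e f ∘ blockMap e g = blockMap e g ∘ blockMap e f := by
    rw [blockMap_comp, blockMap_comp]
    exact congrArg (blockMap e) (funext fun r => (s r).2.2.2)
  obtain ⟨p, hp, x, hfx, hgx⟩ := hcube (blockMap e f) (blockMap e g)
    (continuous_blockMap e fun r => (s r).2.1) (continuous_blockMap e fun r => (s r).2.2.1) hcomm
  refine ⟨p, hp, fun f₀ g₀ hf₀ hg₀ h₀ => ?_⟩
  obtain ⟨r, hr⟩ := hs ⟨(f₀, g₀), hf₀, hg₀, h₀⟩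
  have hfr : f r = f₀ := by simp [f, hr]
  have hgr : g r = g₀ := by simp [g, hr]
  exact ⟨cubeBlock e r x, hfr ▸ tendsto_iterate_cubeBlock e f r hfx,
    hgr ▸ tendsto_iterate_cubeBlock e g r hgx⟩
end

section
/- An ultrafilter can be homeomorphic to at most 𝔠 many other ultrafilters: identify each subset A of ℕ with its characteristic function χ_A in the Cantor space 2^ℕ (product topology), and for an ultrafilter p on ℕ let P = {χ_A : A ∈ p} ⊆ 2^ℕ with the subspace topology. Then for every free ultrafilter p on ℕ, the set of free ultrafilters q on ℕ such that Q = {χ_A : A ∈ q} is homeomorphic to P has cardinality at most 𝔠 = 2^ℵ₀. -/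
/-- The copy `{χ_A : A ∈ p}` of an ultrafilter `p` inside the Cantor space `2^ℕ`. -/
def ufSet (p : Ultrafilter ℕ) : Set (ℕ → Bool) := {f : ℕ → Bool | {n : ℕ | f n = true} ∈ p}

/-- An ultrafilter on `ℕ` is determined by its copy in the Cantor space. -/
theorem ufSet_injective : Function.Injective ufSet := by
  intro q r h
  ext A
  classical
  have hA := Set.ext_iff.1 h fun n => decide (n ∈ A)
  simpa [ufSet] using hA

/-- A separable space has at most continuum many continuous images in the Cantor space. -/
theorem mk_continuous_ranges_le_continuum (X : Type*) [TopologicalSpace X]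
    [TopologicalSpace.SeparableSpace X] [Nonempty X] :
    Cardinal.mk {S : Set (ℕ → Bool) | ∃ f : X → ℕ → Bool, Continuous f ∧ Set.range f = S}
      ≤ Cardinal.continuum := by
  have hcard : Cardinal.mk (ℕ → ℕ → Bool) = Cardinal.continuum := by simp
  rw [← hcard]
  choose f hf hrange using fun S :
    {S : Set (ℕ → Bool) | ∃ f : X → ℕ → Bool, Continuous f ∧ Set.range f = S} => S.2
  refine Cardinal.mk_le_of_injective
    (f := fun S n => f S (TopologicalSpace.denseSeq X n)) fun S T hST => ?_
  have hfST : f S = f T :=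
    (TopologicalSpace.denseRange_denseSeq X).equalizer (hf S) (hf T) hST
  exact Subtype.ext (by rw [← hrange S, ← hrange T, hfST])

theorem at_most_continuum_homeomorphic_ultrafilters (p : Ultrafilter ℕ) (hp : IsFreeUF p) :
    Cardinal.mk {q : Ultrafilter ℕ | IsFreeUF q ∧ Nonempty (↥(ufSet q) ≃ₜ ↥(ufSet p))}
      ≤ Cardinal.continuum := by
  have : Nonempty (ufSet p) := ⟨⟨fun _ => true, Filter.mem_of_superset Filter.univ_mem fun _ _ => rfl⟩⟩
  refine le_trans ?_ (mk_continuous_ranges_le_continuum (ufSet p))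
  refine Cardinal.mk_le_of_injective (f := fun q => ⟨ufSet q.1, ?_⟩) fun q r h =>
    Subtype.ext (ufSet_injective (congrArg Subtype.val h))
  obtain ⟨-, ⟨e⟩⟩ := q.2
  refine ⟨fun x => (e.symm x : ℕ → Bool), continuous_subtype_val.comp e.symm.continuous, ?_⟩
  exact (e.symm.surjective.range_comp Subtype.val).trans Subtype.range_coe
end

section
/- No point of ℕ* has countable tightness: for every free ultrafilter p on ℕ there exists a set S ⊆ ℕ* \ {p} such that p lies in the closure of S in ℕ* but p does not lie in the closure of C for any countable subset C of S. -/
theorem mem_closure_Nstar_iff {p : NstarSpace} {S : Set NstarSpace} :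
    p ∈ closure S ↔ ∀ B ∈ p.1, ∃ q ∈ S, B ∈ q.1 := by
  rw [closure_subtype, ultrafilterBasis_is_basis.mem_closure_iff]
  constructor
  · intro h B hB
    obtain ⟨_, hq, q, hqS, rfl⟩ := h {u | B ∈ u} ⟨B, rfl⟩ hB
    exact ⟨q, hqS, hq⟩
  · rintro h _ ⟨B, rfl⟩ hB
    obtain ⟨q, hqS, hq⟩ := h B hB
    exact ⟨q.1, hq, q, hqS, rfl⟩

theorem isFreeUF_of_le_cofinite {u : Ultrafilter ℕ} (hu : (u : Filter ℕ) ≤ Filter.cofinite) :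
    IsFreeUF u := fun _ hA hfin =>
  Ultrafilter.compl_notMem_iff.mpr hA (hu hfin.compl_mem_cofinite)

theorem exists_mem_Nstar_of_infinite {A : Set ℕ} (hA : A.Infinite) :
    ∃ q : NstarSpace, A ∈ q.1 := by
  have : (Filter.cofinite ⊓ Filter.principal A).NeBot := hA.cofinite_inf_principal_neBot
  have h := Ultrafilter.of_le (Filter.cofinite ⊓ Filter.principal A)
  exact ⟨⟨Ultrafilter.of _, isFreeUF_of_le_cofinite (h.trans inf_le_left)⟩,
    Filter.le_principal_iff.mp (h.trans inf_le_right)⟩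

theorem IsFreeUF.mem_of_diff_finite {u : Ultrafilter ℕ} (hu : IsFreeUF u) {A B : Set ℕ}
    (hA : A ∈ u) (hAB : (A \ B).Finite) : B ∈ u := by
  by_contra hB
  exact hu _ (Filter.inter_mem hA (Ultrafilter.compl_mem_iff_notMem.mpr hB)) hAB

theorem notMem_closure_of_countable {p : NstarSpace} {C : Set NstarSpace} (hC : C.Countable)
    (h : ∀ q : ℕ → NstarSpace, (∀ k, q k ∈ C) → ∃ E ∉ p.1, ∀ k, E ∈ (q k).1) :
    p ∉ closure C := by
  rcases C.eq_empty_or_nonempty with rfl | hne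
  · simp
  obtain ⟨q, rfl⟩ := hC.exists_eq_range hne
  obtain ⟨E, hEp, hEq⟩ := h q fun k => ⟨k, rfl⟩
  rw [mem_closure_Nstar_iff]
  intro hcl
  obtain ⟨_, ⟨k, rfl⟩, hk⟩ := hcl Eᶜ (Ultrafilter.compl_mem_iff_notMem.mpr hEp)
  exact Ultrafilter.compl_mem_iff_notMem.mp hk (hEq k)

/-- No point of `ℕ*` is isolated. -/
theorem mem_closure_compl_singleton_Nstar (p : NstarSpace) : p ∈ closure {p}ᶜ := by
  rw [mem_closure_Nstar_iff]
  intro B hB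
  have hBinf : B.Infinite := p.2 B hB
  have key : ∀ D ⊆ B, D.Infinite → D ∉ p.1 → ∃ q ∈ ({p}ᶜ : Set NstarSpace), B ∈ q.1 := by
    intro D hDB hD hDp
    obtain ⟨q, hq⟩ := exists_mem_Nstar_of_infinite hD
    refine ⟨q, ?_, Filter.mem_of_superset hq hDB⟩
    rintro rfl
    exact hDp hq
  obtain ⟨D, E, rfl, hDE, hcard⟩ := hBinf.exists_union_disjoint_cardinal_eq_of_infinite
  obtain ⟨e⟩ := Cardinal.eq.mp hcard
  have hiff : D.Finite ↔ E.Finite := e.finite_iff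
  have hDinf : D.Infinite := fun hD => hBinf (hD.union (hiff.mp hD))
  by_cases hDp : D ∈ p.1
  · refine key E Set.subset_union_right (fun hE => hDinf (hiff.mpr hE)) fun hEp => ?_
    exact p.1.empty_notMem (hDE.inter_eq ▸ Filter.inter_mem hDp hEp)
  · exact key D Set.subset_union_left hDinf hDp

/-- A pseudo-union of countably many sets almost contained in each member of a decreasing
sequence is again almost contained in each member. -/
theorem exists_pseudounion {A E : ℕ → Set ℕ} (hA : Antitone A)
    (hE : ∀ k n, (E k \ A n).Finite) :
    ∃ F : Set ℕ, (∀ n, (F \ A n).Finite) ∧ ∀ k, (E k \ F).Finite := by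
  refine ⟨⋃ k, E k ∩ A k, fun n => ?_, fun k => ?_⟩
  · refine ((Set.finite_lt_nat n).biUnion fun k _ => hE k n).subset ?_
    rintro x ⟨hx, hxn⟩
    obtain ⟨k, hxE, hxA⟩ := Set.mem_iUnion.mp hx
    exact Set.mem_biUnion (lt_of_not_ge fun hnk => hxn (hA hnk hxA)) ⟨hxE, hxn⟩
  · refine (hE k k).subset ?_
    rintro x ⟨hxE, hx⟩
    exact ⟨hxE, fun hxA => hx (Set.mem_iUnion.mpr ⟨k, hxE, hxA⟩)⟩

theorem exists_infinite_pseudointersection {B : Set ℕ} {A : ℕ → Set ℕ} (hA : Antitone A)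
    (hBA : ∀ n, (B ∩ A n).Infinite) :
    ∃ D ⊆ B, D.Infinite ∧ ∀ n, (D \ A n).Finite := by
  choose x hx hlt using fun n => (hBA n).exists_gt n
  refine ⟨Set.range x, ?_, ?_, fun n => ?_⟩
  · rintro _ ⟨n, rfl⟩
    exact (hx n).1
  · exact Set.infinite_of_forall_exists_gt fun n => ⟨x n, ⟨n, rfl⟩, hlt n⟩
  · refine ((Set.finite_lt_nat n).image x).subset ?_
    rintro _ ⟨⟨k, rfl⟩, hk⟩
    exact ⟨k, lt_of_not_ge fun hnk => hk (hA hnk (hx k).2), rfl⟩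

/-- The complement of a P-point has no countable subset accumulating at it. -/
theorem notMem_closure_of_isPPoint {p : NstarSpace}
    (hP : ∀ A : ℕ → Set ℕ, Antitone A → (∀ n, A n ∈ p.1) → ∃ F ∈ p.1, ∀ n, (F \ A n).Finite)
    {C : Set NstarSpace} (hC : C.Countable) (hpC : p ∉ C) : p ∉ closure C := by
  refine notMem_closure_of_countable hC fun q hq => ?_
  have hsep : ∀ k, ∃ A ∈ p.1, A ∉ (q k).1 := by
    intro k
    by_contra! hle
    refine hpC ?_
    have : q k = p := Subtype.ext (Ultrafilter.coe_le_coe.mp hle)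
    exact this ▸ hq k
  choose A hAp hAq using hsep
  obtain ⟨F, hFp, hF⟩ := hP (fun n => ⋂ k ∈ Set.Iic n, A k)
    (fun m n hmn => Set.biInter_subset_biInter_left (Set.Iic_subset_Iic.mpr hmn))
    (fun n => (Filter.biInter_mem (Set.finite_Iic n)).mpr fun k _ => hAp k)
  refine ⟨Fᶜ, fun h => Ultrafilter.compl_mem_iff_notMem.mp h hFp, fun k => ?_⟩
  refine Ultrafilter.compl_mem_iff_notMem.mpr fun hFq => hAq k ?_
  exact Filter.mem_of_superset ((q k).2.mem_of_diff_finite hFq (hF k))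
    (Set.biInter_subset_of_mem (Set.mem_Iic.mpr le_rfl))

theorem no_point_of_Nstar_has_countable_tightness
    (p : Ultrafilter ℕ) (hp : IsFreeUF p) :
    ∃ S : Set NstarSpace, (⟨p, hp⟩ : NstarSpace) ∉ S ∧
      (⟨p, hp⟩ : NstarSpace) ∈ closure S ∧
      ∀ C ⊆ S, C.Countable → (⟨p, hp⟩ : NstarSpace) ∉ closure C := by
  by_cases hP : ∀ A : ℕ → Set ℕ, Antitone A → (∀ n, A n ∈ p) → ∃ F ∈ p, ∀ n, (F \ A n).Finite
  · exact ⟨{⟨p, hp⟩}ᶜ, fun h => h rfl, mem_closure_compl_singleton_Nstar _, fun C hCS hC =>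
      notMem_closure_of_isPPoint hP hC fun h => hCS h rfl⟩
  push Not at hP
  obtain ⟨A, hA, hAp, hnot⟩ := hP
  have hnotMem : ∀ F : Set ℕ, (∀ n, (F \ A n).Finite) → F ∉ p := fun F hF hFp =>
    let ⟨n, hn⟩ := hnot F hFp
    hn (hF n)
  refine ⟨{q | ∃ F ∈ q.1, ∀ n, (F \ A n).Finite}, ?_, ?_, fun C hCS hC => ?_⟩
  · rintro ⟨F, hFp, hF⟩
    exact hnotMem F hF hFp
  · refine mem_closure_Nstar_iff.mpr fun B hB => ?_
    obtain ⟨D, hDB, hDinf, hD⟩ := exists_infinite_pseudointersection hA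
      fun n => hp _ (Filter.inter_mem hB (hAp n))
    obtain ⟨q, hq⟩ := exists_mem_Nstar_of_infinite hDinf
    exact ⟨q, ⟨D, hq, hD⟩, Filter.mem_of_superset hq hDB⟩
  · refine notMem_closure_of_countable hC fun q hq => ?_
    choose E hEq hE using fun k => hCS (hq k)
    obtain ⟨F, hF, hEF⟩ := exists_pseudounion hA hE
    exact ⟨F, hnotMem F hF, fun k => (q k).2.mem_of_diff_finite (hEq k) (hEF k)⟩
end
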